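/- Theorem 1(ii), ergodic O(1/k) rate of the PD3O algorithm: Suppose the stepsizes are constant, γ_k ≡ γ ∈ (0, 2/L_F), and η ≥ ‖K‖². Define, for every k ≥ 1, the weighted ergodic iterate x̄^k = (2/(k(k+1))) Σ_{i=1}^{k} i·x^i. Then Ψ(x̄^k) − Ψ(x*) = O(1/k); that is, there exists a constant C ≥ 0 such that Ψ(x̄^k) − Ψ(x*) ≤ C/k for every k ≥ 1. -/

import Mathlib

open Filter Topology RealInnerProductSpace

noncomputable section

/-- `p` is a minimizer of `y ↦ σ·G(y) + (1/2)‖y − z‖²`, i.e. `p = prox_{σG}(z)`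
(the minimizer is unique when `G` is convex). -/
def IsProxPt {E : Type*} [NormedAddCommGroup E] [InnerProductSpace ℝ E]
    (σ : ℝ) (G : E → ℝ) (z p : E) : Prop :=
  ∀ y, σ * G p + ‖p - z‖ ^ 2 / 2 ≤ σ * G y + ‖y - z‖ ^ 2 / 2

/-- `u ∈ ∂G(z)`. -/
def IsSubgradientAt {E : Type*} [NormedAddCommGroup E] [InnerProductSpace ℝ E]
    (G : E → ℝ) (z u : E) : Prop :=
  ∀ y, G z + ⟪u, y - z⟫ ≤ G y

/-!
A primal-dual solution `(x⋆, h⋆)` is a stationary point of PD3O, and PD3O is nonexpansive in the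
quadratic form `‖q‖² - 2⟪K q, u⟫ + η‖u‖²`: hence the iterates stay bounded, and since
`γ < 2 / L_F`, cocoercivity of `∇F` leaves enough slack to make `‖∇F(xᵏ) - ∇F(x⋆)‖²` summable.
With `p` the proximal point of `H` in the dual update, the gap
`F(xᵏ) + R(xᵏ) + H(pᵏ) - Ψ(x⋆)` is a telescoping term plus such a summable one, so it is `O(1/k)`
at the ergodic means. The residual `K xᵏ - pᵏ` is itself an increment `aᵏ⁺¹ - aᵏ` of a bounded
sequence, so by Abel summation its weighted mean is `O(1/k)`; `H`, being Lipschitz on bounded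
sets, may then be evaluated at `K x̄` instead of `p̄`.
-/

lemma sub_fderiv_le_of_isMin_add {E : Type*} [NormedAddCommGroup E] [NormedSpace ℝ E]
    {G φ : E → ℝ} {φ' : E →L[ℝ] ℝ} {p : E} (hG : ConvexOn ℝ Set.univ G)
    (hφ : HasFDerivAt φ φ' p) (hmin : ∀ y, G p + φ p ≤ G y + φ y) (y : E) :
    G p - φ' (y - p) ≤ G y := by
  have hmin_line : IsMinOn (fun t : ℝ => t * (G y - G p) + φ (p + t • (y - p)))
      (Set.Icc 0 1) 0 := by
    intro t ht
    have hconv : G (p + t • (y - p)) ≤ (1 - t) * G p + t * G y := by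
      have := hG.2 (Set.mem_univ p) (Set.mem_univ y) (sub_nonneg.2 ht.2) ht.1 (by ring)
      rwa [show (1 - t) • p + t • y = p + t • (y - p) by module] at this
    have := hmin (p + t • (y - p))
    simp only [Set.mem_ofPred_eq, zero_mul, zero_smul, add_zero, zero_add]
    linarith
  have hderiv : HasDerivAt (fun t : ℝ => t * (G y - G p) + φ (p + t • (y - p)))
      (G y - G p + φ' (y - p)) 0 := by
    simpa using ((hasDerivAt_id (0 : ℝ)).mul_const (G y - G p)).fun_add
      (hφ.hasLineDerivAt (y - p))
  have hdir : (1 : ℝ) ∈ posTangentConeAt (Set.Icc 0 1) 0 :=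
    mem_posTangentConeAt_of_segment_subset (by rw [zero_add, segment_eq_Icc zero_le_one])
  have := hmin_line.localize.hasFDerivWithinAt_nonneg
    hderiv.hasFDerivAt.hasFDerivWithinAt hdir
  simp only [ContinuousLinearMap.toSpanSingleton_apply, one_smul] at this
  linarith

section ConvexAnalysis

variable {E : Type*} [NormedAddCommGroup E] [InnerProductSpace ℝ E]

lemma IsProxPt.isSubgradientAt {σ : ℝ} {G : E → ℝ} {z p : E} (h : IsProxPt σ G z p)
    (hσ : 0 < σ) (hG : ConvexOn ℝ Set.univ G) : IsSubgradientAt G p (σ⁻¹ • (z - p)) := by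
  intro y
  have hφ : HasFDerivAt (fun y : E => ‖y - z‖ ^ 2 / 2) (innerSL ℝ (p - z)) p := by
    refine (((hasFDerivAt_id p).sub_const z).norm_sq.mul_const (2⁻¹ : ℝ)).congr_fderiv ?_
    ext w
    simp
  have hmin := sub_fderiv_le_of_isMin_add (hG.smul hσ.le) hφ h y
  simp only [smul_eq_mul, innerSL_apply_apply] at hmin
  have : σ * (G p + σ⁻¹ * ⟪z - p, y - p⟫) ≤ σ * G y := by
    rw [mul_add, mul_inv_cancel_left₀ hσ.ne', ← neg_sub p z, inner_neg_left]
    linarith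
  rw [real_inner_smul_left]
  exact le_of_mul_le_mul_left this hσ

lemma IsSubgradientAt.inner_sub_sub_nonneg {G : E → ℝ} {y z v w : E}
    (hv : IsSubgradientAt G y v) (hw : IsSubgradientAt G z w) : 0 ≤ ⟪v - w, y - z⟫ := by
  have hyz := hv z
  have hzy := hw y
  rw [← neg_sub y z, inner_neg_right] at hyz
  rw [inner_sub_left]
  linarith

variable [CompleteSpace E] {F : E → ℝ} {F' : E → E} {L : ℝ}

lemma isSubgradientAt_of_hasGradientAt {x g : E} (hconv : ConvexOn ℝ Set.univ F)
    (hgrad : HasGradientAt F g x) : IsSubgradientAt F x g := by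
  intro y
  have := sub_fderiv_le_of_isMin_add hconv hgrad.hasFDerivAt.fun_neg (by simp) y
  simpa using this

lemma le_add_inner_add_sq_of_lipschitz_gradient (hgrad : ∀ z, HasGradientAt F (F' z) z)
    {x : E} (hlip : ∀ z, ‖F' z - F' x‖ ≤ L * ‖z - x‖) (d : E) :
    F (x + d) ≤ F x + ⟪F' x, d⟫ + L / 2 * ‖d‖ ^ 2 := by
  have hF (t : ℝ) : HasDerivAt (fun t : ℝ => F (x + t • d)) ⟪F' (x + t • d), d⟫ t := by
    have hline : HasDerivAt (fun t : ℝ => x + t • d) d t := by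
      simpa using ((hasDerivAt_id t).smul_const d).const_add x
    exact (hgrad (x + t • d)).hasFDerivAt.comp_hasDerivAt t hline
  have hquad (t : ℝ) : HasDerivAt (fun t : ℝ => F x + t * ⟪F' x, d⟫ + L / 2 * ‖d‖ ^ 2 * t ^ 2)
      (⟪F' x, d⟫ + L * ‖d‖ ^ 2 * t) t := by
    refine ((((hasDerivAt_id t).mul_const ⟪F' x, d⟫).const_add (F x)).add
      ((hasDerivAt_pow 2 t).const_mul (L / 2 * ‖d‖ ^ 2))).congr_deriv ?_
    push_cast
    ring
  have hderiv_le (t : ℝ) (ht : t ∈ Set.Ico (0 : ℝ) 1) :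
      ⟪F' (x + t • d), d⟫ ≤ ⟪F' x, d⟫ + L * ‖d‖ ^ 2 * t := by
    have : ⟪F' (x + t • d) - F' x, d⟫ ≤ L * (t * ‖d‖) * ‖d‖ := by
      refine (real_inner_le_norm _ _).trans (mul_le_mul_of_nonneg_right ?_ (norm_nonneg d))
      simpa [norm_smul, abs_of_nonneg ht.1] using hlip (x + t • d)
    rw [inner_sub_left] at this
    linarith
  have := image_le_of_deriv_right_le_deriv_boundary
    (fun t _ => (hF t).continuousAt.continuousWithinAt) (fun t _ => (hF t).hasDerivWithinAt)
    (by simp) (fun t _ => (hquad t).continuousAt.continuousWithinAt)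
    (fun t _ => (hquad t).hasDerivWithinAt) hderiv_le (Set.right_mem_Icc.2 zero_le_one)
  simpa using this

-- Descend from `z` along the gradient of `F - ⟪F' x, ·⟫`, whose minimum is attained at `x`.
lemma add_inner_add_sq_le_of_lipschitz_gradient (hL : 0 < L)
    (hconv : ConvexOn ℝ Set.univ F) (hgrad : ∀ z, HasGradientAt F (F' z) z)
    (hlip : ∀ y z, ‖F' y - F' z‖ ≤ L * ‖y - z‖) (x z : E) :
    F x + ⟪F' x, z - x⟫ + 1 / (2 * L) * ‖F' z - F' x‖ ^ 2 ≤ F z := by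
  set g := F' z - F' x with hg
  have hdescent := le_add_inner_add_sq_of_lipschitz_gradient hgrad (hlip · z) (-(L⁻¹ • g))
  have hsub := isSubgradientAt_of_hasGradientAt hconv (hgrad x) (z + -(L⁻¹ • g))
  have hinner : ⟪F' z, g⟫ = ⟪F' x, g⟫ + ‖g‖ ^ 2 := by
    rw [← real_inner_self_eq_norm_sq, ← inner_add_left, hg, add_sub_cancel]
  rw [show z + -(L⁻¹ • g) - x = (z - x) - L⁻¹ • g by abel, inner_sub_right,
    real_inner_smul_right] at hsub
  rw [norm_neg, norm_smul, mul_pow, Real.norm_eq_abs, sq_abs, inner_neg_right,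
    real_inner_smul_right, hinner] at hdescent
  have hcoeff : 1 / (2 * L) * ‖g‖ ^ 2 = L⁻¹ * ‖g‖ ^ 2 - L / 2 * (L⁻¹ ^ 2 * ‖g‖ ^ 2) := by
    field_simp
    ring
  linarith

lemma cocoercive_of_lipschitz_gradient (hL : 0 < L)
    (hconv : ConvexOn ℝ Set.univ F) (hgrad : ∀ z, HasGradientAt F (F' z) z)
    (hlip : ∀ y z, ‖F' y - F' z‖ ≤ L * ‖y - z‖) (y z : E) :
    1 / L * ‖F' y - F' z‖ ^ 2 ≤ ⟪F' y - F' z, y - z⟫ := by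
  have hzy := add_inner_add_sq_le_of_lipschitz_gradient hL hconv hgrad hlip z y
  have hyz := add_inner_add_sq_le_of_lipschitz_gradient hL hconv hgrad hlip y z
  rw [norm_sub_rev, ← neg_sub y z, inner_neg_right] at hyz
  have hcoeff : 1 / L * ‖F' y - F' z‖ ^ 2 = 2 * (1 / (2 * L) * ‖F' y - F' z‖ ^ 2) := by
    field_simp
  rw [hcoeff, inner_sub_left]
  linarith

end ConvexAnalysis

lemma exists_lipschitzOnWith_closedBall_of_convexOn {E : Type*} [NormedAddCommGroup E]
    [NormedSpace ℝ E] [FiniteDimensional ℝ E] {f : E → ℝ} (hf : ConvexOn ℝ Set.univ f)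
    (r : ℝ) : ∃ Λ, LipschitzOnWith Λ f (Metric.closedBall 0 r) :=
  hf.locallyLipschitz.locallyLipschitzOn.exists_lipschitzOnWith_of_compact
    (isCompact_closedBall 0 r)

section ErgodicMean

variable {E : Type*} [AddCommGroup E] [Module ℝ E]

/-- The weights `2 i / (k (k + 1))`, `1 ≤ i ≤ k`, of the ergodic iterate, indexed by `j = i - 1`. -/
def ergodicWeight (k j : ℕ) : ℝ := 2 / ((k : ℝ) * ((k : ℝ) + 1)) * ((j : ℝ) + 1)

/-- The mean `∑ j < k, 2 (j + 1) / (k (k + 1)) • x j`: the weighted ergodic iterate of a sequence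
whose `i`-th term is stored as `x (i - 1)`. It is `0` for `k = 0`. -/
def ergodicMean (x : ℕ → E) (k : ℕ) : E := ∑ j ∈ Finset.range k, ergodicWeight k j • x j

lemma ergodicWeight_nonneg (k j : ℕ) : 0 ≤ ergodicWeight k j := by
  unfold ergodicWeight
  positivity

lemma sum_ergodicWeight {k : ℕ} (hk : k ≠ 0) :
    ∑ j ∈ Finset.range k, ergodicWeight k j = 1 := by
  have hgauss (n : ℕ) : ∑ j ∈ Finset.range n, ((j : ℝ) + 1) = (n : ℝ) * (n + 1) / 2 := by
    induction n with
    | zero => simp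
    | succ n ih =>
      rw [Finset.sum_range_succ, ih]
      push_cast
      ring
  simp only [ergodicWeight]
  rw [← Finset.mul_sum, hgauss]
  field_simp

lemma ergodicMean_eq_smul_sum_Icc (x : ℕ → E) (k : ℕ) :
    ergodicMean (fun j => x (j + 1)) k =
      (2 / ((k : ℝ) * ((k : ℝ) + 1))) • ∑ i ∈ Finset.Icc 1 k, (i : ℝ) • x i := by
  have hshift : ∑ i ∈ Finset.Icc 1 k, (i : ℝ) • x i =
      ∑ j ∈ Finset.range k, ((j + 1 : ℕ) : ℝ) • x (j + 1) := by
    rw [Finset.range_eq_Ico, Finset.sum_Ico_add' (fun i : ℕ => (i : ℝ) • x i), zero_add,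
      Finset.Ico_add_one_right_eq_Icc]
  simp only [hshift, ergodicMean, ergodicWeight, mul_smul, ← Finset.smul_sum, Nat.cast_succ]

lemma map_ergodicMean {E₁ : Type*} [AddCommGroup E₁] [Module ℝ E₁] (T : E →ₗ[ℝ] E₁) (x : ℕ → E)
    (k : ℕ) : T (ergodicMean x k) = ergodicMean (fun j => T (x j)) k := by
  simp only [ergodicMean, map_sum, map_smul]

lemma ergodicMean_sub (x y : ℕ → E) (k : ℕ) :
    ergodicMean (fun j => x j - y j) k = ergodicMean x k - ergodicMean y k := by
  simp only [ergodicMean, smul_sub, Finset.sum_sub_distrib]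

lemma ergodicMean_mem {s : Set E} (hs : Convex ℝ s) {x : ℕ → E} (hx : ∀ j, x j ∈ s) {k : ℕ}
    (hk : k ≠ 0) : ergodicMean x k ∈ s :=
  hs.sum_mem (fun j _ => ergodicWeight_nonneg k j) (sum_ergodicWeight hk) (fun j _ => hx j)

lemma map_ergodicMean_le {s : Set E} {f : E → ℝ} (hf : ConvexOn ℝ s f) {x : ℕ → E}
    (hx : ∀ j, x j ∈ s) {k : ℕ} (hk : k ≠ 0) :
    f (ergodicMean x k) ≤ ergodicMean (fun j => f (x j)) k :=
  hf.map_sum_le (fun j _ => ergodicWeight_nonneg k j) (sum_ergodicWeight hk) (fun j _ => hx j)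

lemma ergodicMean_succ_sub (a : ℕ → E) (k : ℕ) :
    ergodicMean (fun j => a (j + 1) - a j) k =
      (2 / ((k : ℝ) * ((k : ℝ) + 1))) • ((k : ℝ) • a k - ∑ j ∈ Finset.range k, a j) := by
  have habel : ∑ j ∈ Finset.range k, ((j : ℝ) + 1) • (a (j + 1) - a j) =
      (k : ℝ) • a k - ∑ j ∈ Finset.range k, a j := by
    induction k with
    | zero => simp
    | succ n ih =>
      rw [Finset.sum_range_succ, ih, Finset.sum_range_succ]
      push_cast
      module
  simp only [ergodicMean, ergodicWeight, mul_smul, ← Finset.smul_sum, habel]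

lemma ergodicMean_mono {v w : ℕ → ℝ} (h : ∀ j, v j ≤ w j) (k : ℕ) :
    ergodicMean v k ≤ ergodicMean w k :=
  Finset.sum_le_sum fun j _ => mul_le_mul_of_nonneg_left (h j) (ergodicWeight_nonneg k j)

lemma norm_ergodicMean_succ_sub_le {E : Type*} [NormedAddCommGroup E] [NormedSpace ℝ E]
    {a : ℕ → E} {A : ℝ} (ha : ∀ j, ‖a j‖ ≤ A) (k : ℕ) :
    ‖ergodicMean (fun j => a (j + 1) - a j) k‖ ≤ 4 * A / (k + 1) := by
  have hA : 0 ≤ A := (norm_nonneg _).trans (ha 0)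
  have hsum : ‖∑ j ∈ Finset.range k, a j‖ ≤ k * A := by
    simpa using norm_sum_le_of_le (Finset.range k) fun j _ => ha j
  have hlast : ‖(k : ℝ) • a k‖ ≤ k * A := by
    rw [norm_smul, Real.norm_natCast]
    gcongr
    exact ha k
  rw [ergodicMean_succ_sub, norm_smul, Real.norm_of_nonneg (by positivity)]
  calc 2 / ((k : ℝ) * (k + 1)) * ‖(k : ℝ) • a k - ∑ j ∈ Finset.range k, a j‖
      ≤ 2 / ((k : ℝ) * (k + 1)) * (k * A + k * A) := by
        gcongr
        exact (norm_sub_le _ _).trans (add_le_add hlast hsum)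
    _ ≤ 4 * A / (k + 1) := by
        rcases k.eq_zero_or_pos with rfl | hk
        · simpa using hA
        · exact le_of_eq (by field_simp; ring)

lemma ergodicMean_sub_succ_le {W : ℕ → ℝ} {B : ℝ} (hW : ∀ j, 0 ≤ W j) (hB : ∀ j, W j ≤ B)
    (k : ℕ) : ergodicMean (fun j => W j - W (j + 1)) k ≤ 2 * B / (k + 1) := by
  have hsum : ∑ j ∈ Finset.range k, W j ≤ k * B := by
    simpa using Finset.sum_le_card_nsmul (Finset.range k) W B fun j _ => hB j
  have htel := ergodicMean_succ_sub (fun j => -W j) k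
  simp only [neg_sub_neg, Finset.sum_neg_distrib, smul_eq_mul] at htel
  rw [htel]
  calc 2 / ((k : ℝ) * (k + 1)) * (k * -W k - -∑ j ∈ Finset.range k, W j)
      ≤ 2 / ((k : ℝ) * (k + 1)) * (k * B) := by
        gcongr
        linarith [mul_nonneg k.cast_nonneg (hW k)]
    _ ≤ 2 * B / (k + 1) := by
        rcases k.eq_zero_or_pos with rfl | hk
        · simpa using (hW 0).trans (hB 0)
        · exact le_of_eq (by field_simp)

lemma ergodicMean_le_of_sum_le {G : ℕ → ℝ} {D : ℝ} (hG : ∀ j, 0 ≤ G j) {k : ℕ}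
    (hD : ∑ j ∈ Finset.range k, G j ≤ D) : ergodicMean G k ≤ 2 * D / (k + 1) := by
  have hweight (j : ℕ) (hj : j ∈ Finset.range k) : ergodicWeight k j ≤ 2 / (k + 1) := by
    have hjk : (j : ℝ) + 1 ≤ k := mod_cast Finset.mem_range.1 hj
    have hk : (0 : ℝ) < k := j.cast_add_one_pos.trans_le hjk
    calc ergodicWeight k j ≤ 2 / ((k : ℝ) * (k + 1)) * k := by unfold ergodicWeight; gcongr
      _ = 2 / (k + 1) := by field_simp
  calc ergodicMean G k ≤ ∑ j ∈ Finset.range k, 2 / ((k : ℝ) + 1) * G j :=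
        Finset.sum_le_sum fun j hj => mul_le_mul_of_nonneg_right (hweight j hj) (hG j)
    _ ≤ 2 / ((k : ℝ) + 1) * D := by
        rw [← Finset.mul_sum]
        gcongr
    _ = 2 * D / (k + 1) := by ring

lemma map_ergodicMean_le_of_le_telescope {f : E → ℝ} (hf : ConvexOn ℝ Set.univ f) {x : ℕ → E}
    {W G : ℕ → ℝ} {B D : ℝ} (hfx : ∀ j, f (x j) ≤ W j - W (j + 1) + G j) (hW : ∀ j, 0 ≤ W j)
    (hB : ∀ j, W j ≤ B) (hG : ∀ j, 0 ≤ G j) {k : ℕ} (hD : ∑ j ∈ Finset.range k, G j ≤ D)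
    (hk : k ≠ 0) : f (ergodicMean x k) ≤ 2 * (B + D) / (k + 1) := by
  calc f (ergodicMean x k) ≤ ergodicMean (fun j => f (x j)) k :=
        map_ergodicMean_le hf (fun j => Set.mem_univ (x j)) hk
    _ ≤ ergodicMean (fun j => W j - W (j + 1) - -G j) k :=
        ergodicMean_mono (fun j => by simpa using hfx j) k
    _ = ergodicMean (fun j => W j - W (j + 1)) k + ergodicMean G k := by
        rw [ergodicMean_sub, sub_eq_add_neg]
        simp [ergodicMean]
    _ ≤ 2 * B / (k + 1) + 2 * D / (k + 1) :=
        add_le_add (ergodicMean_sub_succ_le hW hB k) (ergodicMean_le_of_sum_le hG hD)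
    _ = 2 * (B + D) / (k + 1) := by ring

end ErgodicMean

section PD3O

open scoped InnerProduct

variable {𝒳 𝒰 : Type*} [NormedAddCommGroup 𝒳] [InnerProductSpace ℝ 𝒳]
  [NormedAddCommGroup 𝒰] [InnerProductSpace ℝ 𝒰] {K : 𝒳 →L[ℝ] 𝒰} {γ η : ℝ}

/-- The quadratic form of the block operator `[[I, -K*], [-K, η I]]` on `𝒳 × 𝒰`, in which
PD3O is nonexpansive. It is positive semidefinite when `‖K‖ ^ 2 ≤ η`. -/
def pd3oForm (K : 𝒳 →L[ℝ] 𝒰) (η : ℝ) (q : 𝒳) (u : 𝒰) : ℝ :=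
  ‖q‖ ^ 2 - 2 * ⟪K q, u⟫ + η * ‖u‖ ^ 2

lemma norm_map_sq_le (hη : ‖K‖ ^ 2 ≤ η) (q : 𝒳) : ‖K q‖ ^ 2 ≤ η * ‖q‖ ^ 2 := by
  calc ‖K q‖ ^ 2 ≤ (‖K‖ * ‖q‖) ^ 2 := by gcongr; exact K.le_opNorm q
    _ = ‖K‖ ^ 2 * ‖q‖ ^ 2 := mul_pow _ _ _
    _ ≤ η * ‖q‖ ^ 2 := by gcongr

lemma norm_smul_sub_map_sq_le_mul_pd3oForm (hη : ‖K‖ ^ 2 ≤ η) (q : 𝒳) (u : 𝒰) :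
    ‖η • u - K q‖ ^ 2 ≤ η * pd3oForm K η q u := by
  have hK := norm_map_sq_le hη q
  rw [pd3oForm, norm_sub_sq_real, norm_smul, mul_pow, Real.norm_eq_abs, sq_abs,
    real_inner_smul_left, real_inner_comm]
  linarith

lemma inner_sub_add_inner_eq_pd3oForm {q q' x g : 𝒳} {u u' p : 𝒰} (hx : x = γ • (q' + g))
    (hp : p = K x - (γ * η) • (u' - u) + γ • K (q' - q)) :
    ⟪q - q', x⟫ - ⟪u, K x⟫ + ⟪u', p⟫ =
      γ / 2 * (pd3oForm K η q u - pd3oForm K η q' u' + ‖g‖ ^ 2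
        - pd3oForm K η (q' - q + g) (u' - u)) := by
  subst hp hx
  simp only [pd3oForm, ← real_inner_self_eq_norm_sq, map_add, map_sub, map_smul, inner_add_left,
    inner_add_right, inner_sub_left, inner_sub_right, real_inner_smul_right]
  simp only [real_inner_comm]
  ring

variable [CompleteSpace 𝒳] [CompleteSpace 𝒰]

lemma norm_sub_adjoint_sq_le_pd3oForm (hη : ‖K‖ ^ 2 ≤ η) (q : 𝒳) (u : 𝒰) :
    ‖q - (K†) u‖ ^ 2 ≤ pd3oForm K η q u := by
  have hK : ‖(K†) u‖ ^ 2 ≤ η * ‖u‖ ^ 2 :=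
    norm_map_sq_le (by rwa [LinearIsometryEquiv.norm_map]) u
  rw [pd3oForm, norm_sub_sq_real, ContinuousLinearMap.adjoint_inner_right]
  linarith

lemma pd3oForm_nonneg (hη : ‖K‖ ^ 2 ≤ η) (q : 𝒳) (u : 𝒰) : 0 ≤ pd3oForm K η q u :=
  (sq_nonneg _).trans (norm_sub_adjoint_sq_le_pd3oForm hη q u)

lemma pd3oForm_add_le (hη : ‖K‖ ^ 2 ≤ η) (q : 𝒳) (u v : 𝒰) :
    pd3oForm K η q (u + v) ≤ 2 * pd3oForm K η q u + 2 * (η * ‖v‖ ^ 2) := by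
  have hparallelogram : pd3oForm K η q (u + v) + pd3oForm K η q (u - v)
      = 2 * pd3oForm K η q u + 2 * (η * ‖v‖ ^ 2) := by
    simp only [pd3oForm, norm_add_sq_real, norm_sub_sq_real, inner_add_right, inner_sub_right]
    ring
  linarith [pd3oForm_nonneg hη q (u - v)]

lemma inner_sub_add_inner_le_pd3oForm (hγ : 0 ≤ γ) (hη : ‖K‖ ^ 2 ≤ η) {q q' x g : 𝒳} {u u' p : 𝒰}
    (hx : x = γ • (q' + g)) (hp : p = K x - (γ * η) • (u' - u) + γ • K (q' - q)) :
    ⟪q - q', x⟫ - ⟪u, K x⟫ + ⟪u', p⟫ ≤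
      γ / 2 * (pd3oForm K η q u - pd3oForm K η q' u' + ‖g‖ ^ 2) := by
  rw [inner_sub_add_inner_eq_pd3oForm hx hp]
  have hform := pd3oForm_nonneg hη (q' - q + g) (u' - u)
  gcongr
  linarith

/-- One PD3O step from `(q, u)` to `(q', u')` through the primal iterate `x`, with the proximal
points `x = prox_{γR}(γ(q - K* u))` and `p = prox_{γηH}(⋯)` replaced by their optimality
conditions; `u'` is then a subgradient of `H` at `p`. -/
structure IsPD3OStep (K : 𝒳 →L[ℝ] 𝒰) (F' : 𝒳 → 𝒳) (R : 𝒳 → ℝ) (H : 𝒰 → ℝ) (γ η : ℝ)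
    (q : 𝒳) (u : 𝒰) (x q' : 𝒳) (u' p : 𝒰) : Prop where
  primal_subgradient : IsSubgradientAt R x (q - (K†) u - γ⁻¹ • x)
  q_eq : q' = γ⁻¹ • x - F' x
  dual_subgradient : IsSubgradientAt H p u'
  p_eq : p = K x - (γ * η) • (u' - u) + γ • K (q' - q)

variable {F R : 𝒳 → ℝ} {H : 𝒰 → ℝ} {F' : 𝒳 → 𝒳}

lemma isPD3OStep_of_isProxPt (hγ : 0 < γ) (hη : 0 < η) (hR : ConvexOn ℝ Set.univ R)
    (hH : ConvexOn ℝ Set.univ H) {q x q' : 𝒳} {u u' p : 𝒰}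
    (hx : IsProxPt γ R (γ • (q - (K†) u)) x) (hq : q' = γ⁻¹ • x - F' x)
    (hp : IsProxPt (γ * η) H ((γ * η) • (u + η⁻¹ • K (γ⁻¹ • x + q' - q))) p)
    (hu : u' = u + η⁻¹ • K (γ⁻¹ • x + q' - q) - (γ * η)⁻¹ • p) :
    IsPD3OStep K F' R H γ η q u x q' u' p where
  primal_subgradient := by
    simpa [smul_sub, inv_smul_smul₀ hγ.ne'] using hx.isSubgradientAt hγ hR
  q_eq := hq
  dual_subgradient := by
    have := hp.isSubgradientAt (mul_pos hγ hη) hH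
    rwa [smul_sub, inv_smul_smul₀ (mul_pos hγ hη).ne', ← hu] at this
  p_eq := by
    rw [hu]
    simp only [map_sub, map_add, map_smul]
    match_scalars <;> field_simp <;> ring

lemma isPD3OStep_of_optimal {xstar rstar : 𝒳} {hstar : 𝒰}
    (hr : IsSubgradientAt R xstar rstar) (hh : IsSubgradientAt H (K xstar) hstar)
    (hopt : F' xstar + rstar + (K†) hstar = 0) :
    IsPD3OStep K F' R H γ η (γ⁻¹ • xstar - F' xstar) hstar xstar (γ⁻¹ • xstar - F' xstar) hstar
      (K xstar) where
  primal_subgradient := by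
    rwa [show γ⁻¹ • xstar - F' xstar - (K†) hstar - γ⁻¹ • xstar = rstar by
      rw [eq_neg_of_add_eq_zero_right hopt]; abel]
  q_eq := rfl
  dual_subgradient := hh
  p_eq := by simp

/-- The PD3O iterations, in the form of `IsPD3OStep`; the indices of `x` and `p` are
shifted, so that `x k` and `p k` are computed from `q k` and `u k`. -/
def IsPD3OOrbit (K : 𝒳 →L[ℝ] 𝒰) (F' : 𝒳 → 𝒳) (R : 𝒳 → ℝ) (H : 𝒰 → ℝ) (γ η : ℝ)
    (x q : ℕ → 𝒳) (u p : ℕ → 𝒰) : Prop :=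
  ∀ k, IsPD3OStep K F' R H γ η (q k) (u k) (x k) (q (k + 1)) (u (k + 1)) (p k)

lemma exists_isPD3OOrbit (hγ : 0 < γ) (hη : ‖K‖ ^ 2 ≤ η) (hR : ConvexOn ℝ Set.univ R)
    (hH : ConvexOn ℝ Set.univ H) {z : 𝒳} {h : 𝒰} (hh : IsSubgradientAt H (K z) h)
    {x q : ℕ → 𝒳} {u : ℕ → 𝒰} (hx : ∀ k, IsProxPt γ R (γ • (q k - (K†) (u k))) (x (k + 1)))
    (hq : ∀ k, q (k + 1) = (1 / γ) • x (k + 1) - F' (x (k + 1)))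
    (hu : ∀ k, ∃ p, IsProxPt (γ * η) H
        ((γ * η) • (u k + (1 / η) • K ((1 / γ) • x (k + 1) + q (k + 1) - q k))) p ∧
      u (k + 1) = (u k + (1 / η) • K ((1 / γ) • x (k + 1) + q (k + 1) - q k))
        - (1 / (γ * η)) • p) :
    ∃ v p : ℕ → 𝒰, IsPD3OOrbit K F' R H γ η (fun k => x (k + 1)) q v p := by
  simp only [one_div] at hq hu
  rcases ((sq_nonneg ‖K‖).trans hη).eq_or_lt with rfl | hη_pos
  · -- Here `K = 0` and the dual iterates, meaningless through `1 / η = 0`, do not affect the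
    -- primal ones: replace them by a constant subgradient.
    obtain rfl : K = 0 := norm_eq_zero.1 (pow_eq_zero_iff two_ne_zero |>.1
      (hη.antisymm (sq_nonneg _)))
    refine ⟨fun _ => h, fun _ => 0, fun k => ⟨?_, hq k, by simpa using hh, by simp⟩⟩
    simpa [smul_sub, inv_smul_smul₀ hγ.ne'] using (hx k).isSubgradientAt hγ hR
  · choose p hp hup using hu
    exact ⟨u, p, fun k => isPD3OStep_of_isProxPt hγ hη_pos hR hH (hx k) (hq k) (hp k) (hup k)⟩

namespace IsPD3OStep

variable {q q' x q₁ q₁' x₁ : 𝒳} {u u' p u₁ u₁' p₁ : 𝒰} {β : ℝ}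

lemma x_eq (hs : IsPD3OStep K F' R H γ η q u x q' u' p) (hγ : γ ≠ 0) :
    x = γ • (q' + F' x) := by
  rw [hs.q_eq, sub_add_cancel, smul_inv_smul₀ hγ]

lemma objective_sub_le (hs : IsPD3OStep K F' R H γ η q u x q' u' p) (hγ : 0 < γ)
    (hη : ‖K‖ ^ 2 ≤ η) (hF : IsSubgradientAt F x (F' x)) (z : 𝒳) :
    F x + R x + H p - (F z + R z + H (K z)) ≤
      γ / 2 * (pd3oForm K η (q - (γ⁻¹ • z - F' z)) u - pd3oForm K η (q' - (γ⁻¹ • z - F' z)) u'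
        + ‖F' x - F' z‖ ^ 2) := by
  set r := γ⁻¹ • z - F' z with hr
  have hx : x - z = γ • ((q' - r) + (F' x - F' z)) := by
    have hz : z = γ • (r + F' z) := by rw [hr, sub_add_cancel, smul_inv_smul₀ hγ.ne']
    nth_rw 1 [hs.x_eq hγ.ne', hz]
    module
  have hp : p - K z = K (x - z) - (γ * η) • (u' - u) + γ • K ((q' - r) - (q - r)) := by
    rw [hs.p_eq, map_sub K x z, sub_sub_sub_cancel_right]
    abel
  have hform := inner_sub_add_inner_le_pd3oForm hγ.le hη hx hp
  have hFz := hF z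
  have hRz := hs.primal_subgradient z
  have hHz := hs.dual_subgradient (K z)
  rw [← neg_sub x z, inner_neg_right] at hFz hRz
  rw [← neg_sub p, inner_neg_right] at hHz
  have hsplit : ⟪q - r - (q' - r), x - z⟫ - ⟪u, K (x - z)⟫
      = ⟪q - (K†) u - γ⁻¹ • x, x - z⟫ + ⟪F' x, x - z⟫ := by
    rw [← ContinuousLinearMap.adjoint_inner_left, ← inner_sub_left, ← inner_add_left, hs.q_eq]
    congr 1
    abel
  linarith

lemma pd3oForm_sub_add_le (hs : IsPD3OStep K F' R H γ η q u x q' u' p)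
    (hs₁ : IsPD3OStep K F' R H γ η q₁ u₁ x₁ q₁' u₁' p₁) (hγ : 0 < γ) (hη : ‖K‖ ^ 2 ≤ η)
    (hcoco : β * ‖F' x - F' x₁‖ ^ 2 ≤ ⟪F' x - F' x₁, x - x₁⟫) :
    pd3oForm K η (q' - q₁') (u' - u₁') + (2 * β / γ - 1) * ‖F' x - F' x₁‖ ^ 2 ≤
      pd3oForm K η (q - q₁) (u - u₁) := by
  have hx : x - x₁ = γ • ((q' - q₁') + (F' x - F' x₁)) := by
    nth_rw 1 [hs.x_eq hγ.ne', hs₁.x_eq hγ.ne']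
    module
  have hp : p - p₁ = K (x - x₁) - (γ * η) • ((u' - u₁') - (u - u₁))
      + γ • K ((q' - q₁') - (q - q₁)) := by
    rw [hs.p_eq, hs₁.p_eq]
    simp only [map_sub]
    module
  have hform := inner_sub_add_inner_le_pd3oForm hγ.le hη hx hp
  have hR := hs.primal_subgradient.inner_sub_sub_nonneg hs₁.primal_subgradient
  have hH := hs.dual_subgradient.inner_sub_sub_nonneg hs₁.dual_subgradient
  have hsplit : ⟪q - q₁ - (q' - q₁'), x - x₁⟫ - ⟪u - u₁, K (x - x₁)⟫
      = ⟪q - (K†) u - γ⁻¹ • x - (q₁ - (K†) u₁ - γ⁻¹ • x₁), x - x₁⟫ + ⟪F' x - F' x₁, x - x₁⟫ := by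
    rw [← ContinuousLinearMap.adjoint_inner_left, ← inner_sub_left, ← inner_add_left, hs.q_eq,
      hs₁.q_eq, map_sub]
    congr 1
    abel
  have hscaled : γ / 2 * (2 * β / γ * ‖F' x - F' x₁‖ ^ 2) ≤
      γ / 2 * (pd3oForm K η (q - q₁) (u - u₁) - pd3oForm K η (q' - q₁') (u' - u₁')
        + ‖F' x - F' x₁‖ ^ 2) := by
    rw [show γ / 2 * (2 * β / γ * ‖F' x - F' x₁‖ ^ 2) = β * ‖F' x - F' x₁‖ ^ 2 by field_simp]
    linarith
  linarith [le_of_mul_le_mul_left hscaled (half_pos hγ)]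

lemma norm_sub_le (hs : IsPD3OStep K F' R H γ η q u x q' u' p)
    (hs₁ : IsPD3OStep K F' R H γ η q₁ u₁ x₁ q₁' u₁' p₁) (hγ : 0 < γ) (hη : ‖K‖ ^ 2 ≤ η) :
    ‖x - x₁‖ ≤ γ * √(pd3oForm K η (q - q₁) (u - u₁)) := by
  have hmono := hs.primal_subgradient.inner_sub_sub_nonneg hs₁.primal_subgradient
  rw [show q - (K†) u - γ⁻¹ • x - (q₁ - (K†) u₁ - γ⁻¹ • x₁)
      = (q - q₁ - (K†) (u - u₁)) - γ⁻¹ • (x - x₁) by rw [map_sub, smul_sub]; abel,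
    inner_sub_left, real_inner_smul_left, real_inner_self_eq_norm_sq] at hmono
  have hinner := real_inner_le_norm (q - q₁ - (K†) (u - u₁)) (x - x₁)
  have hnorm : ‖x - x₁‖ ≤ γ * ‖q - q₁ - (K†) (u - u₁)‖ := by
    rcases (norm_nonneg (x - x₁)).eq_or_lt with hzero | hpos
    · rw [← hzero]
      positivity
    · have : γ⁻¹ * ‖x - x₁‖ ≤ ‖q - q₁ - (K†) (u - u₁)‖ :=
        le_of_mul_le_mul_right (by linarith) hpos
      rwa [inv_mul_le_iff₀ hγ] at this
  refine hnorm.trans (mul_le_mul_of_nonneg_left ?_ hγ.le)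
  exact Real.le_sqrt_of_sq_le (norm_sub_adjoint_sq_le_pd3oForm hη _ _)

end IsPD3OStep

namespace IsPD3OOrbit

variable {x q : ℕ → 𝒳} {u p : ℕ → 𝒰} {x₁ q₁ : 𝒳} {u₁ p₁ : 𝒰} {β : ℝ}

lemma pd3oForm_add_sum_le (ho : IsPD3OOrbit K F' R H γ η x q u p)
    (hfix : IsPD3OStep K F' R H γ η q₁ u₁ x₁ q₁ u₁ p₁) (hγ : 0 < γ) (hη : ‖K‖ ^ 2 ≤ η)
    (hcoco : ∀ y, β * ‖F' y - F' x₁‖ ^ 2 ≤ ⟪F' y - F' x₁, y - x₁⟫) (k : ℕ) :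
    pd3oForm K η (q k - q₁) (u k - u₁)
        + (2 * β / γ - 1) * ∑ j ∈ Finset.range k, ‖F' (x j) - F' x₁‖ ^ 2 ≤
      pd3oForm K η (q 0 - q₁) (u 0 - u₁) := by
  induction k with
  | zero => simp
  | succ k ih =>
    rw [Finset.sum_range_succ]
    linarith [(ho k).pd3oForm_sub_add_le hfix hγ hη (hcoco (x k))]

lemma pd3oForm_le (ho : IsPD3OOrbit K F' R H γ η x q u p)
    (hfix : IsPD3OStep K F' R H γ η q₁ u₁ x₁ q₁ u₁ p₁) (hγ : 0 < γ) (hη : ‖K‖ ^ 2 ≤ η)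
    (hcoco : ∀ y, β * ‖F' y - F' x₁‖ ^ 2 ≤ ⟪F' y - F' x₁, y - x₁⟫) (hβ : γ < 2 * β) (k : ℕ) :
    pd3oForm K η (q k - q₁) (u k - u₁) ≤ pd3oForm K η (q 0 - q₁) (u 0 - u₁) := by
  have hκ : 0 < 2 * β / γ - 1 := sub_pos.2 ((one_lt_div hγ).2 hβ)
  have hsum : 0 ≤ (2 * β / γ - 1) * ∑ j ∈ Finset.range k, ‖F' (x j) - F' x₁‖ ^ 2 := by positivity
  linarith [ho.pd3oForm_add_sum_le hfix hγ hη hcoco k]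

lemma sum_norm_sub_sq_le (ho : IsPD3OOrbit K F' R H γ η x q u p)
    (hfix : IsPD3OStep K F' R H γ η q₁ u₁ x₁ q₁ u₁ p₁) (hγ : 0 < γ) (hη : ‖K‖ ^ 2 ≤ η)
    (hcoco : ∀ y, β * ‖F' y - F' x₁‖ ^ 2 ≤ ⟪F' y - F' x₁, y - x₁⟫) (hβ : γ < 2 * β) (k : ℕ) :
    ∑ j ∈ Finset.range k, ‖F' (x j) - F' x₁‖ ^ 2 ≤
      pd3oForm K η (q 0 - q₁) (u 0 - u₁) / (2 * β / γ - 1) := by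
  rw [le_div_iff₀' (sub_pos.2 ((one_lt_div hγ).2 hβ))]
  linarith [ho.pd3oForm_add_sum_le hfix hγ hη hcoco k, pd3oForm_nonneg hη (q k - q₁) (u k - u₁)]

lemma norm_primal_le {V : ℝ} (ho : IsPD3OOrbit K F' R H γ η x q u p)
    (hfix : IsPD3OStep K F' R H γ η q₁ u₁ x₁ q₁ u₁ p₁) (hγ : 0 < γ) (hη : ‖K‖ ^ 2 ≤ η)
    (hV : ∀ k, pd3oForm K η (q k - q₁) (u k - u₁) ≤ V) (k : ℕ) : ‖x k‖ ≤ ‖x₁‖ + γ * √V := by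
  calc ‖x k‖ ≤ ‖x₁‖ + ‖x k - x₁‖ := norm_le_norm_add_norm_sub' _ _
    _ ≤ ‖x₁‖ + γ * √(pd3oForm K η (q k - q₁) (u k - u₁)) := by
        gcongr
        exact (ho k).norm_sub_le hfix hγ hη
    _ ≤ ‖x₁‖ + γ * √V := by
        gcongr
        exact hV k

-- The residual `K (x k) - p k` is the increment of `γ • (η • u k - K (q k - r))`.
lemma norm_map_ergodicMean_sub_le {B : ℝ} {r : 𝒳} (ho : IsPD3OOrbit K F' R H γ η x q u p)
    (hγ : 0 ≤ γ) (hη : ‖K‖ ^ 2 ≤ η) (hB : ∀ k, pd3oForm K η (q k - r) (u k) ≤ B) (k : ℕ) :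
    ‖K (ergodicMean x k) - ergodicMean p k‖ ≤ 4 * (γ * √(η * B)) / (k + 1) := by
  set a : ℕ → 𝒰 := fun j => γ • (η • u j - K (q j - r)) with ha
  have hη0 : 0 ≤ η := (sq_nonneg ‖K‖).trans hη
  have hbound (j : ℕ) : ‖a j‖ ≤ γ * √(η * B) := by
    rw [ha, norm_smul, Real.norm_of_nonneg hγ]
    gcongr
    exact Real.le_sqrt_of_sq_le ((norm_smul_sub_map_sq_le_mul_pd3oForm hη _ _).trans
      (mul_le_mul_of_nonneg_left (hB j) hη0))
  have hincr (j : ℕ) : K (x j) - p j = a (j + 1) - a j := by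
    rw [(ho j).p_eq, ha]
    simp only [map_sub]
    module
  have hmap : K (ergodicMean x k) = ergodicMean (fun j => K (x j)) k :=
    map_ergodicMean K.toLinearMap x k
  rw [hmap, ← ergodicMean_sub]
  simp only [hincr]
  exact norm_ergodicMean_succ_sub_le hbound k

lemma objective_ergodicMean_sub_le {B D : ℝ} {z : 𝒳} (ho : IsPD3OOrbit K F' R H γ η x q u p)
    (hγ : 0 < γ) (hη : ‖K‖ ^ 2 ≤ η) (hF : ConvexOn ℝ Set.univ F) (hR : ConvexOn ℝ Set.univ R)
    (hH : ConvexOn ℝ Set.univ H) (hF' : ∀ y, IsSubgradientAt F y (F' y))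
    (hB : ∀ k, pd3oForm K η (q k - (γ⁻¹ • z - F' z)) (u k) ≤ B) {k : ℕ}
    (hD : ∑ j ∈ Finset.range k, ‖F' (x j) - F' z‖ ^ 2 ≤ D) (hk : k ≠ 0) :
    F (ergodicMean x k) + R (ergodicMean x k) + H (ergodicMean p k)
      - (F z + R z + H (K z)) ≤ γ * (B + D) / (k + 1) := by
  have hconv : ConvexOn ℝ Set.univ
      (fun w : 𝒳 × 𝒰 => F w.1 + R w.1 + H w.2 - (F z + R z + H (K z))) :=
    (((hF.comp_linearMap (LinearMap.fst ℝ 𝒳 𝒰)).add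
      (hR.comp_linearMap (LinearMap.fst ℝ 𝒳 𝒰))).add
      (hH.comp_linearMap (LinearMap.snd ℝ 𝒳 𝒰))).add_const _
  have hrate := map_ergodicMean_le_of_le_telescope hconv (x := fun j => (x j, p j))
    (W := fun j => γ / 2 * pd3oForm K η (q j - (γ⁻¹ • z - F' z)) (u j))
    (G := fun j => γ / 2 * ‖F' (x j) - F' z‖ ^ 2) (B := γ / 2 * B) (D := γ / 2 * D)
    (fun j => ((ho j).objective_sub_le hγ hη (hF' (x j)) z).trans_eq (by ring))
    (fun j => mul_nonneg (by positivity) (pd3oForm_nonneg hη _ _))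
    (fun j => by gcongr; exact hB j) (fun j => by positivity)
    (by rw [← Finset.mul_sum]; gcongr) hk
  have hfst : (ergodicMean (fun j => (x j, p j)) k).1 = ergodicMean x k :=
    map_ergodicMean (LinearMap.fst ℝ 𝒳 𝒰) _ k
  have hsnd : (ergodicMean (fun j => (x j, p j)) k).2 = ergodicMean p k :=
    map_ergodicMean (LinearMap.snd ℝ 𝒳 𝒰) _ k
  rw [hfst, hsnd] at hrate
  exact hrate.trans_eq (by ring)

lemma exists_map_ergodicMean_le_add_div {B X : ℝ} {r : 𝒳}
    (ho : IsPD3OOrbit K F' R H γ η x q u p) (hγ : 0 ≤ γ) (hη : ‖K‖ ^ 2 ≤ η)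
    (hH : ∀ s, ∃ Λ, LipschitzOnWith Λ H (Metric.closedBall 0 s))
    (hB : ∀ k, pd3oForm K η (q k - r) (u k) ≤ B) (hX : ∀ k, ‖x k‖ ≤ X) :
    ∃ C, 0 ≤ C ∧ ∀ k : ℕ, k ≠ 0 →
      H (K (ergodicMean x k)) ≤ H (ergodicMean p k) + C / (k + 1) := by
  set A := γ * √(η * B)
  have hA0 : 0 ≤ A := by positivity
  obtain ⟨Λ, hΛ⟩ := hH (‖K‖ * X + 4 * A)
  refine ⟨Λ * (4 * A), by positivity, fun k hk => ?_⟩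
  have hres : ‖K (ergodicMean x k) - ergodicMean p k‖ ≤ 4 * A / (k + 1) :=
    ho.norm_map_ergodicMean_sub_le hγ hη hB k
  have hres_le : ‖K (ergodicMean x k) - ergodicMean p k‖ ≤ 4 * A :=
    hres.trans (div_le_self (by positivity) (by linarith [k.cast_nonneg (α := ℝ)]))
  have hx_norm : ‖ergodicMean x k‖ ≤ X := mem_closedBall_zero_iff.1 <|
    ergodicMean_mem (convex_closedBall 0 X) (fun j => mem_closedBall_zero_iff.2 (hX j)) hk
  have hKx_norm : ‖K (ergodicMean x k)‖ ≤ ‖K‖ * X := K.le_opNorm_of_le hx_norm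
  have hKx : K (ergodicMean x k) ∈ Metric.closedBall 0 (‖K‖ * X + 4 * A) :=
    mem_closedBall_zero_iff.2 (by linarith)
  have hp : ergodicMean p k ∈ Metric.closedBall 0 (‖K‖ * X + 4 * A) :=
    mem_closedBall_zero_iff.2 <| (norm_le_norm_add_norm_sub _ _).trans <| by gcongr
  have hlip := (le_abs_self _).trans (hΛ.norm_sub_le hKx hp)
  have hscaled := mul_le_mul_of_nonneg_left hres Λ.coe_nonneg
  rw [mul_div_assoc (Λ : ℝ)]
  linarith

lemma exists_objective_ergodicMean_sub_le (ho : IsPD3OOrbit K F' R H γ η x q u p)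
    (hfix : IsPD3OStep K F' R H γ η (γ⁻¹ • x₁ - F' x₁) u₁ x₁ (γ⁻¹ • x₁ - F' x₁) u₁ p₁)
    (hγ : 0 < γ) (hη : ‖K‖ ^ 2 ≤ η) (hF : ConvexOn ℝ Set.univ F) (hR : ConvexOn ℝ Set.univ R)
    (hH : ConvexOn ℝ Set.univ H) (hF' : ∀ y, IsSubgradientAt F y (F' y))
    (hHlip : ∀ s, ∃ Λ, LipschitzOnWith Λ H (Metric.closedBall 0 s))
    (hcoco : ∀ y, β * ‖F' y - F' x₁‖ ^ 2 ≤ ⟪F' y - F' x₁, y - x₁⟫) (hβ : γ < 2 * β) :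
    ∃ C, 0 ≤ C ∧ ∀ k : ℕ, k ≠ 0 →
      F (ergodicMean x k) + R (ergodicMean x k) + H (K (ergodicMean x k))
        - (F x₁ + R x₁ + H (K x₁)) ≤ C / (k + 1) := by
  set r := γ⁻¹ • x₁ - F' x₁
  set V := pd3oForm K η (q 0 - r) (u 0 - u₁)
  have hV (k : ℕ) : pd3oForm K η (q k - r) (u k - u₁) ≤ V :=
    ho.pd3oForm_le hfix hγ hη hcoco hβ k
  have hB (k : ℕ) : pd3oForm K η (q k - r) (u k) ≤ 2 * V + 2 * (η * ‖u₁‖ ^ 2) := by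
    have := pd3oForm_add_le hη (q k - r) (u k - u₁) u₁
    rw [sub_add_cancel] at this
    linarith [hV k]
  obtain ⟨C, hC, hHC⟩ := ho.exists_map_ergodicMean_le_add_div hγ.le hη hHlip hB
    (ho.norm_primal_le hfix hγ hη hV)
  set M := γ * (2 * V + 2 * (η * ‖u₁‖ ^ 2) + V / (2 * β / γ - 1))
  have hM : 0 ≤ M := by
    have hV0 : 0 ≤ V := pd3oForm_nonneg hη _ _
    have hη0 : 0 ≤ η := (sq_nonneg ‖K‖).trans hη
    have hκ : 0 ≤ 2 * β / γ - 1 := sub_nonneg.2 ((one_le_div hγ).2 hβ.le)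
    positivity
  refine ⟨M + C, add_nonneg hM hC, fun k hk => ?_⟩
  have hgap := ho.objective_ergodicMean_sub_le hγ hη hF hR hH hF' hB
    (ho.sum_norm_sub_sq_le hfix hγ hη hcoco hβ k) hk
  rw [add_div]
  linarith [hHC k hk]

end IsPD3OOrbit

end PD3O

theorem pd3o_ergodic_rate_general
    {𝒳 𝒰 : Type*}
    [NormedAddCommGroup 𝒳] [InnerProductSpace ℝ 𝒳] [CompleteSpace 𝒳]
    [NormedAddCommGroup 𝒰] [InnerProductSpace ℝ 𝒰] [CompleteSpace 𝒰]
    (K : 𝒳 →L[ℝ] 𝒰)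
    (F R : 𝒳 → ℝ) (H : 𝒰 → ℝ) (F' : 𝒳 → 𝒳) (L_F : ℝ)
    (hLF : 0 < L_F)
    (hFconv : ConvexOn ℝ Set.univ F)
    (hRconv : ConvexOn ℝ Set.univ R)
    (hHconv : ConvexOn ℝ Set.univ H)
    (hHlip : ∀ s, ∃ Λ, LipschitzOnWith Λ H (Metric.closedBall 0 s))
    (hFgrad : ∀ z, HasGradientAt F (F' z) z)
    (hFlip : ∀ z z', ‖F' z - F' z'‖ ≤ L_F * ‖z - z'‖)
    (xstar : 𝒳) (rstar : 𝒳) (hstar : 𝒰)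
    (hrstar : IsSubgradientAt R xstar rstar)
    (hhstar : IsSubgradientAt H (K xstar) hstar)
    (hopt : F' xstar + rstar + (ContinuousLinearMap.adjoint K) hstar = 0)
    (γ η : ℝ) (hγ0 : 0 < γ) (hγ2 : γ < 2 / L_F) (hη : ‖K‖ ^ 2 ≤ η)
    (x q : ℕ → 𝒳) (u : ℕ → 𝒰)
    (hx : ∀ k, IsProxPt γ R
      (γ • (q k - (ContinuousLinearMap.adjoint K) (u k))) (x (k + 1)))
    (hq : ∀ k, q (k + 1) = (1 / γ) • x (k + 1) - F' (x (k + 1)))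
    (hu : ∀ k, ∃ p, IsProxPt (γ * η) H
        ((γ * η) • (u k + (1 / η) • K ((1 / γ) • x (k + 1) + q (k + 1) - q k))) p ∧
      u (k + 1) = (u k + (1 / η) • K ((1 / γ) • x (k + 1) + q (k + 1) - q k))
        - (1 / (γ * η)) • p)
    (xbar : ℕ → 𝒳)
    (hxbar : ∀ k, xbar k =
      (2 / ((k : ℝ) * ((k : ℝ) + 1))) • ∑ i ∈ Finset.Icc 1 k, (i : ℝ) • x i) :
    ∃ C : ℝ, 0 ≤ C ∧ ∀ k : ℕ, 1 ≤ k →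
      (F (xbar k) + R (xbar k) + H (K (xbar k)))
        - (F xstar + R xstar + H (K xstar)) ≤ C / k := by
  obtain ⟨v, p, ho⟩ := exists_isPD3OOrbit hγ0 hη hRconv hHconv hhstar hx hq hu
  have hβ : γ < 2 * (1 / L_F) := by rwa [mul_one_div]
  obtain ⟨C, hC, hrate⟩ := ho.exists_objective_ergodicMean_sub_le
    (isPD3OStep_of_optimal hrstar hhstar hopt) hγ0 hη hFconv hRconv hHconv
    (fun y => isSubgradientAt_of_hasGradientAt hFconv (hFgrad y)) hHlip
    (fun y => cocoercive_of_lipschitz_gradient hLF hFconv hFgrad hFlip y xstar) hβ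
  refine ⟨C, hC, fun k hk => ?_⟩
  have : (0 : ℝ) < k := Nat.cast_pos.2 hk
  rw [hxbar, ← ergodicMean_eq_smul_sum_Icc]
  exact (hrate k (Nat.one_le_iff_ne_zero.1 hk)).trans (by gcongr; linarith)

/-- Theorem 1(ii): ergodic `O(1/k)` rate of the PD3O algorithm with constant stepsize. -/
theorem pd3o_ergodic_rate
    {𝒳 𝒰 : Type*}
    [NormedAddCommGroup 𝒳] [InnerProductSpace ℝ 𝒳] [FiniteDimensional ℝ 𝒳]
    [NormedAddCommGroup 𝒰] [InnerProductSpace ℝ 𝒰] [FiniteDimensional ℝ 𝒰]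
    (K : 𝒳 →L[ℝ] 𝒰)
    (F R : 𝒳 → ℝ) (H : 𝒰 → ℝ) (F' : 𝒳 → 𝒳) (L_F : ℝ)
    (hLF : 0 < L_F)
    (hFconv : ConvexOn ℝ Set.univ F)
    (hRconv : ConvexOn ℝ Set.univ R)
    (hHconv : ConvexOn ℝ Set.univ H)
    (hFgrad : ∀ z, HasGradientAt F (F' z) z)
    (hFlip : ∀ z z', ‖F' z - F' z'‖ ≤ L_F * ‖z - z'‖)
    -- Assumption 1: existence of a primal-dual solution
    (xstar : 𝒳) (rstar : 𝒳) (hstar : 𝒰)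
    (hrstar : IsSubgradientAt R xstar rstar)
    (hhstar : IsSubgradientAt H (K xstar) hstar)
    (hopt : F' xstar + rstar + (ContinuousLinearMap.adjoint K) hstar = 0)
    -- parameters
    (γ η : ℝ) (hγ0 : 0 < γ) (hγ2 : γ < 2 / L_F) (hη : ‖K‖ ^ 2 ≤ η)
    -- PD3O iterates
    (x q : ℕ → 𝒳) (u : ℕ → 𝒰)
    (hx : ∀ k, IsProxPt γ R
      (γ • (q k - (ContinuousLinearMap.adjoint K) (u k))) (x (k+1)))
    (hq : ∀ k, q (k+1) = (1/γ) • x (k+1) - F' (x (k+1)))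
    (hu : ∀ k, ∃ p, IsProxPt (γ*η) H
        ((γ*η) • (u k + (1/η) • K ((1/γ) • x (k+1) + q (k+1) - q k))) p ∧
      u (k+1) = (u k + (1/η) • K ((1/γ) • x (k+1) + q (k+1) - q k))
        - (1/(γ*η)) • p)
    -- the weighted ergodic iterate
    (xbar : ℕ → 𝒳)
    (hxbar : ∀ k, xbar k =
      (2 / ((k : ℝ) * ((k : ℝ) + 1))) • ∑ i ∈ Finset.Icc 1 k, (i : ℝ) • x i) :
    ∃ C : ℝ, 0 ≤ C ∧ ∀ k : ℕ, 1 ≤ k →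
      (F (xbar k) + R (xbar k) + H (K (xbar k)))
        - (F xstar + R xstar + H (K xstar)) ≤ C / k :=
  pd3o_ergodic_rate_general K F R H F' L_F hLF hFconv hRconv hHconv
    (exists_lipschitzOnWith_closedBall_of_convexOn hHconv) hFgrad hFlip xstar rstar hstar
    hrstar hhstar hopt γ η hγ0 hγ2 hη x q u hx hq hu xbar hxbar
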